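/- arXiv:1305.4444 — 2 statements merged into one kernel-verified Lean document; each statement's English description precedes it below -/
import Mathlib

section
/- Fix a matrix A₀ ∈ 𝔽_q^{(M+1)×k}. The number of matrices A ∈ 𝔽_q^{(M+1)×k} satisfying both S_M·A = S_M·A₀ and A·G' = A₀·G' is exactly q^{k-K₀}. -/
open Matrix

/-!
Translating by `A₀` reduces the count to the `n × k` matrices `X` with `S * X = 0` and `X * G = 0`.
Such an `X` is a linear map that vanishes on the column space of `G` and takes values in the kernel
of `S`, that is, a linear map from the cokernel of `G` to the kernel of `S`. These form a space of
dimension `(k - rank G) * (n - rank S)`, and the Vandermonde matrix `S` has rank `M = n - 1`.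
-/

section LinearMap

variable {R V V' W W' : Type*} [CommRing R]
  [AddCommGroup V] [Module R V] [AddCommGroup V'] [Module R V']
  [AddCommGroup W] [Module R W] [AddCommGroup W'] [Module R W']

/-- The linear maps `f : V → W` killed on both sides, by precomposition with `h` and by
postcomposition with `g`: the homogeneous form of the two constraints being counted. -/
def biannihilator (h : V' →ₗ[R] V) (g : W →ₗ[R] W') : Submodule R (V →ₗ[R] W) :=
  LinearMap.ker (LinearMap.compRight R g) ⊓ LinearMap.ker (LinearMap.lcomp R W h)

theorem mem_biannihilator {h : V' →ₗ[R] V} {g : W →ₗ[R] W'} {f : V →ₗ[R] W} :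
    f ∈ biannihilator h g ↔ g ∘ₗ f = 0 ∧ f ∘ₗ h = 0 :=
  Iff.rfl

/-- A linear map killed by `h` on the right and by `g` on the left is the same thing as a linear map
from the cokernel of `h` to the kernel of `g`. -/
def biannihilatorEquiv (h : V' →ₗ[R] V) (g : W →ₗ[R] W') :
    biannihilator h g ≃ₗ[R] ((V ⧸ LinearMap.range h) →ₗ[R] LinearMap.ker g) where
  toFun f := (LinearMap.range h).liftQ
    (f.1.codRestrict (LinearMap.ker g) fun v => LinearMap.congr_fun f.2.1 v) <| by
      rintro _ ⟨v, rfl⟩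
      exact Subtype.ext (LinearMap.congr_fun f.2.2 v)
  invFun f := ⟨(LinearMap.ker g).subtype ∘ₗ f ∘ₗ (LinearMap.range h).mkQ, mem_biannihilator.mpr
    ⟨by rw [← LinearMap.comp_assoc, LinearMap.comp_ker_subtype, LinearMap.zero_comp],
      by simp only [LinearMap.comp_assoc, LinearMap.range_mkQ_comp, LinearMap.comp_zero]⟩⟩
  map_add' _ _ := by ext; rfl
  map_smul' _ _ := by ext; rfl
  left_inv _ := by ext; rfl
  right_inv _ := by ext; rfl

end LinearMap

section Field

variable {F : Type*} [Field F]

theorem finrank_biannihilator {V V' W W' : Type*}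
    [AddCommGroup V] [Module F V] [FiniteDimensional F V] [AddCommGroup V'] [Module F V']
    [AddCommGroup W] [Module F W] [FiniteDimensional F W] [AddCommGroup W'] [Module F W']
    (h : V' →ₗ[F] V) (g : W →ₗ[F] W') :
    Module.finrank F (biannihilator h g) =
      (Module.finrank F V - Module.finrank F (LinearMap.range h)) *
        (Module.finrank F W - Module.finrank F (LinearMap.range g)) := by
  have finrank_ker : Module.finrank F (LinearMap.ker g) =
      Module.finrank F W - Module.finrank F (LinearMap.range g) :=
    Nat.eq_sub_of_add_eq' g.finrank_range_add_finrank_ker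
  rw [(biannihilatorEquiv h g).finrank_eq, Module.finrank_linearMap, Submodule.finrank_quotient,
    finrank_ker]

theorem rank_rectVandermonde_one {m n : ℕ} (hmn : m ≤ n) {v : Fin m → F}
    (hv : Function.Injective v) : (rectVandermonde v 1 n).rank = m := by
  refine le_antisymm (rank_le_height _) ?_
  have submatrix_eq : (rectVandermonde v 1 n).submatrix id (Fin.castLE hmn) = vandermonde v := by
    ext i j
    simp [rectVandermonde_apply]
  calc
    m = (vandermonde v).rank := by
      rw [rank_of_det_ne_zero (det_vandermonde_ne_zero_iff.mpr hv), Fintype.card_fin]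
    _ ≤ (rectVandermonde v 1 n).rank := submatrix_eq ▸ rank_submatrix_le _ _ _

theorem finrank_range_toLin' {m n : Type*} [Fintype n] [DecidableEq n] (B : Matrix m n F) :
    Module.finrank F (LinearMap.range (toLin' B)) = B.rank :=
  rfl

variable {l m n k : Type*} [Fintype l] [Fintype n] [Fintype k]

theorem toLin'_sub_mem_biannihilator_iff [DecidableEq l] [DecidableEq n] [DecidableEq k]
    {S : Matrix m n F} {G : Matrix k l F} {A A₀ : Matrix n k F} :
    toLin' (A - A₀) ∈ biannihilator (toLin' G) (toLin' S) ↔ S * A = S * A₀ ∧ A * G = A₀ * G := by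
  simp only [mem_biannihilator, ← toLin'_mul, LinearEquiv.map_eq_zero_iff, Matrix.mul_sub,
    Matrix.sub_mul, sub_eq_zero]

theorem stmt_0_general [Fintype F] (S : Matrix m n F) (G : Matrix k l F) (A₀ : Matrix n k F) :
    Nat.card {A : Matrix n k F | S * A = S * A₀ ∧ A * G = A₀ * G} =
      Fintype.card F ^ ((Fintype.card k - G.rank) * (Fintype.card n - S.rank)) := by
  classical
  let translate : {A : Matrix n k F | S * A = S * A₀ ∧ A * G = A₀ * G} ≃
      biannihilator (toLin' G) (toLin' S) :=
    ((Equiv.subRight A₀).trans toLin'.toEquiv).subtypeEquiv fun _ =>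
      toLin'_sub_mem_biannihilator_iff.symm
  rw [Nat.card_congr translate, Module.natCard_eq_pow_finrank (K := F), finrank_biannihilator,
    Module.finrank_fintype_fun_eq_card, Module.finrank_fintype_fun_eq_card,
    finrank_range_toLin', finrank_range_toLin', Nat.card_eq_fintype_card]

end Field

/-- Fix a matrix `A₀ ∈ 𝔽_q^{(M+1)×k}`. The number of matrices
`A ∈ 𝔽_q^{(M+1)×k}` satisfying both `S_M·A = S_M·A₀` and `A·G' = A₀·G'` is exactly
`q^(k-K₀)`, where the columns of `G'` span a subspace of dimension `K₀ ≤ k-1` and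
`S_M` is the Vandermonde-type matrix built from pairwise distinct `s_1,…,s_M`. -/
theorem stmt_0 {F : Type*} [Field F] [Fintype F]
    {M k K K₀ : ℕ} (hM : 1 ≤ M) (hk : 1 ≤ k)
    (s : Fin M → F) (hs : Function.Injective s)
    (S : Matrix (Fin M) (Fin (M + 1)) F)
    (hS : ∀ t j, S t j = s t ^ (j : ℕ))
    (G' : Matrix (Fin k) (Fin K) F)
    (hK₀ : K₀ = Module.finrank F
      (Submodule.span F (Set.range fun j : Fin K => fun i : Fin k => G' i j)))
    (hK₀k : K₀ ≤ k - 1)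
    (A₀ : Matrix (Fin (M + 1)) (Fin k) F) :
    Nat.card {A : Matrix (Fin (M + 1)) (Fin k) F | S * A = S * A₀ ∧ A * G' = A₀ * G'} =
      Fintype.card F ^ (k - K₀) := by
  have rank_G' : G'.rank = K₀ := G'.rank_eq_finrank_span_cols.trans hK₀.symm
  have S_eq : S = rectVandermonde s 1 (M + 1) := by
    ext t j
    simp [hS, rectVandermonde_apply]
  have rank_S : S.rank = M := S_eq ▸ rank_rectVandermonde_one M.le_succ hs
  rw [stmt_0_general, rank_G', rank_S, Fintype.card_fin, Fintype.card_fin, Nat.add_sub_cancel_left,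
    mul_one]
end

section
/- Let 𝒮 = {A ∈ 𝔽_q^{(M+1)×k} : S_M·A = S_M·A₀ and A·g_j = A₀·g_j for j = 1,…,K} and define φ : 𝒮 → 𝔽_q by φ(A) = (1, s_{M+1}, s_{M+1}², …, s_{M+1}^M)·A·g_{K+1}. Then for every y ∈ 𝔽_q the fiber φ⁻¹(y) has exactly q^{k−K−1} elements; in particular φ is surjective and takes each value in 𝔽_q equally often. -/
open Matrix

/-!
Left multiplication by the invertible Vandermonde matrix of `s_1, …, s_{M+1}` identifies `A` with
the pair `(S_M·A, r)`, where `r = (1, s_{M+1}, …, s_{M+1}^M)·A`. On `𝒮` the first component is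
fixed, so `A` is determined by the free row vector `r`; moreover `A·g_j` and `A₀·g_j` already
agree after multiplication by `S_M`, so `A·g_j = A₀·g_j` is the single equation
`r·g_j = (1, s_{M+1}, …, s_{M+1}^M)·A₀·g_j`. With `φ(A) = r·g_{K+1} = y` these are `K + 1`
independent linear equations in the `k` entries of `r`.
-/

section Counting

variable {F ι κ : Type*} [Field F] [Fintype κ] {G : Matrix ι κ F}

theorem mulVecLin_surjective_of_linearIndependent_row (hG : LinearIndependent F G.row) :
    Function.Surjective G.mulVecLin := by
  have := hG.finite
  have := Fintype.ofFinite ι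
  rw [← LinearMap.range_eq_top]
  apply Submodule.eq_top_of_finrank_eq
  rw [Module.finrank_fintype_fun_eq_card]
  exact hG.rank_matrix

theorem finrank_ker_mulVecLin_of_linearIndependent_row [Fintype ι]
    (hG : LinearIndependent F G.row) :
    Module.finrank F G.mulVecLin.ker = Fintype.card κ - Fintype.card ι := by
  have rank_nullity := G.mulVecLin.finrank_range_add_finrank_ker
  rw [Module.finrank_fintype_fun_eq_card] at rank_nullity
  have rank_eq : Module.finrank F G.mulVecLin.range = Fintype.card ι := hG.rank_matrix
  omega

theorem natCard_setOf_mulVec_eq [Fintype ι] (hG : LinearIndependent F G.row) (b : ι → F) :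
    Nat.card {r : κ → F | G *ᵥ r = b} = Nat.card F ^ (Fintype.card κ - Fintype.card ι) := by
  rw [← finrank_ker_mulVecLin_of_linearIndependent_row hG, ← Module.natCard_eq_pow_finrank]
  exact Nat.card_congr <| G.mulVecLin.toAddMonoidHom.fiberEquivKerOfSurjective
    (mulVecLin_surjective_of_linearIndependent_row hG) b

end Counting

section SplitRow

variable {R m n κ : Type*} [NonUnitalSemiring R] [Fintype n] {S : Matrix m n R} {w : n → R}

theorem bijective_mul_vecMul (hSw : Function.Bijective fun x : n → R => (S *ᵥ x, w ⬝ᵥ x)) :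
    Function.Bijective fun A : Matrix n κ R => (S * A, w ᵥ* A) := by
  constructor
  · intro A B hAB
    obtain ⟨hS, hw⟩ := Prod.mk.inj hAB
    have col_eq (j : κ) : A.col j = B.col j :=
      hSw.injective <| Prod.ext (funext fun t => congrFun₂ hS t j) (congrFun hw j)
    exact Matrix.ext fun i j => congrFun (col_eq j) i
  · rintro ⟨C, r⟩
    choose x hx using fun j => hSw.surjective (C.col j, r j)
    refine ⟨of fun i j => x j i, Prod.ext ?_ ?_⟩
    · exact Matrix.ext fun t j => congrFun (congrArg Prod.fst (hx j)) t
    · exact funext fun j => congrArg Prod.snd (hx j)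

theorem natCard_setOf_mul_eq_and_vecMul_mem
    (hSw : Function.Bijective fun x : n → R => (S *ᵥ x, w ⬝ᵥ x))
    (C : Matrix m κ R) (T : Set (κ → R)) :
    Nat.card {A : Matrix n κ R | S * A = C ∧ w ᵥ* A ∈ T} = Nat.card T := by
  have hbij := bijective_mul_vecMul (κ := κ) hSw
  calc Nat.card {A : Matrix n κ R | S * A = C ∧ w ᵥ* A ∈ T}
      = Nat.card ((fun A : Matrix n κ R => (S * A, w ᵥ* A)) ⁻¹' ({C} ×ˢ T)) := rfl
    _ = Nat.card ({C} ×ˢ T : Set (Matrix m κ R × (κ → R))) :=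
        Nat.card_preimage_of_injective hbij.injective fun p _ => hbij.surjective p
    _ = Nat.card T := by
        rw [Nat.card_coe_set_eq, Set.ncard_prod, Set.ncard_singleton, one_mul,
          Nat.card_coe_set_eq]

theorem mulVec_eq_mulVec_iff_of_mul_eq_mul [Fintype κ]
    (hSw : Function.Injective fun x : n → R => (S *ᵥ x, w ⬝ᵥ x))
    {A B : Matrix n κ R} (hAB : S * A = S * B) (v : κ → R) :
    A *ᵥ v = B *ᵥ v ↔ w ᵥ* A ⬝ᵥ v = w ᵥ* B ⬝ᵥ v := by
  have hS : S *ᵥ A *ᵥ v = S *ᵥ B *ᵥ v := by rw [mulVec_mulVec, mulVec_mulVec, hAB]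
  rw [← dotProduct_mulVec, ← dotProduct_mulVec, ← hSw.eq_iff, Prod.mk.injEq, and_iff_right hS]

end SplitRow

theorem bijective_mulVec_castSucc_dotProduct_last {R : Type*} [CommRing R] {M : ℕ}
    {V : Matrix (Fin (M + 1)) (Fin (M + 1)) R} (hV : IsUnit V) :
    Function.Bijective fun x : Fin (M + 1) → R =>
      (V.submatrix Fin.castSucc id *ᵥ x, V (Fin.last M) ⬝ᵥ x) := by
  have hbij : Function.Bijective V.mulVec :=
    ⟨mulVec_injective_of_isUnit hV, mulVec_surjective_iff_isUnit.2 hV⟩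
  have split_last : Function.Bijective fun z : Fin (M + 1) → R => (Fin.init z, z (Fin.last M)) :=
    (Equiv.prodComm _ _).bijective.comp (Fin.snocEquiv fun _ => R).symm.bijective
  exact split_last.comp hbij

theorem bijective_mulVec_dotProduct_of_pow {F : Type*} [Field F] {M : ℕ}
    {s : Fin M → F} {sN : F} (hs : Function.Injective s) (hsN : ∀ t, s t ≠ sN)
    {S : Matrix (Fin M) (Fin (M + 1)) F} (hS : ∀ t j, S t j = s t ^ (j : ℕ)) :
    Function.Bijective fun x : Fin (M + 1) → F =>
      (S *ᵥ x, (fun t : Fin (M + 1) => sN ^ (t : ℕ)) ⬝ᵥ x) := by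
  set V := vandermonde (Fin.snoc s sN : Fin (M + 1) → F) with V_def
  have nodes_injective : Function.Injective (Fin.snoc s sN : Fin (M + 1) → F) :=
    Fin.snoc_injective_iff.2 ⟨hs, fun ⟨t, ht⟩ => hsN t ht⟩
  have V_isUnit : IsUnit V := by
    rw [isUnit_iff_isUnit_det, isUnit_iff_ne_zero]
    exact det_vandermonde_ne_zero_iff.2 nodes_injective
  have S_eq : S = V.submatrix Fin.castSucc id := by
    ext t j
    simp [V_def, vandermonde_apply, hS]
  have last_eq : (fun t : Fin (M + 1) => sN ^ (t : ℕ)) = V (Fin.last M) := by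
    ext t
    simp [V_def, vandermonde_apply]
  rw [S_eq, last_eq]
  exact bijective_mulVec_castSucc_dotProduct_last V_isUnit

theorem stmt_18_general {F m n κ : Type*} [Field F] [Fintype F] [Fintype n] [Fintype κ] {K : ℕ}
    {S : Matrix m n F} {w : n → F}
    (hSw : Function.Bijective fun x : n → F => (S *ᵥ x, w ⬝ᵥ x))
    {g : Fin (K + 1) → κ → F} (hg : LinearIndependent F g) (A₀ : Matrix n κ F) (y : F) :
    Nat.card {A : Matrix n κ F |
      (S * A = S * A₀ ∧ ∀ j : Fin K, A *ᵥ g j.castSucc = A₀ *ᵥ g j.castSucc) ∧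
      w ⬝ᵥ A *ᵥ g (Fin.last K) = y} =
    Fintype.card F ^ (Fintype.card κ - K - 1) := by
  set b : Fin (K + 1) → F := Fin.snoc (fun j : Fin K => w ᵥ* A₀ ⬝ᵥ g j.castSucc) y with b_def
  have fiber_eq : {A : Matrix n κ F |
      (S * A = S * A₀ ∧ ∀ j : Fin K, A *ᵥ g j.castSucc = A₀ *ᵥ g j.castSucc) ∧
      w ⬝ᵥ A *ᵥ g (Fin.last K) = y} =
      {A | S * A = S * A₀ ∧ w ᵥ* A ∈ {r | of g *ᵥ r = b}} := by
    ext A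
    simp only [Set.mem_ofPred_eq, and_assoc]
    refine and_congr_right fun hA => ?_
    simp only [mulVec_eq_mulVec_iff_of_mul_eq_mul hSw.injective hA, dotProduct_mulVec w,
      dotProduct_comm _ (g _), funext_iff, Fin.forall_fin_succ', b_def, Fin.snoc_castSucc,
      Fin.snoc_last]
    rfl
  rw [fiber_eq, natCard_setOf_mul_eq_and_vecMul_mem hSw, natCard_setOf_mulVec_eq (G := of g) hg,
    Nat.card_eq_fintype_card, Fintype.card_fin, Nat.sub_sub]

/-- With `𝒮 = {A : S_M·A = S_M·A₀ and A·g_j = A₀·g_j for j = 1,…,K}`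
and `φ(A) = (1, s_{M+1}, …, s_{M+1}^M)·A·g_{K+1}`, every fiber `φ⁻¹(y)` has exactly
`q^(k−K−1)` elements; in particular `φ` is surjective and equidistributed.
Here `s_1,…,s_M,s_{M+1}` are pairwise distinct and `g_1,…,g_{K+1} ∈ 𝔽_q^k` are
linearly independent. -/
theorem stmt_18 {F : Type*} [Field F] [Fintype F]
    {M k K : ℕ} (hM : 1 ≤ M) (hk : 1 ≤ k) (hKk : K + 1 ≤ k)
    (s : Fin M → F) (sN : F) (hs : Function.Injective s) (hsN : ∀ t, s t ≠ sN)
    (S : Matrix (Fin M) (Fin (M + 1)) F) (hS : ∀ t j, S t j = s t ^ (j : ℕ))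
    (g : Fin (K + 1) → (Fin k → F)) (hg : LinearIndependent F g)
    (A₀ : Matrix (Fin (M + 1)) (Fin k) F) :
    ∀ y : F,
      Nat.card {A : Matrix (Fin (M + 1)) (Fin k) F |
        (S * A = S * A₀ ∧
          ∀ j : Fin K, A.mulVec (g j.castSucc) = A₀.mulVec (g j.castSucc)) ∧
        (fun t : Fin (M + 1) => sN ^ (t : ℕ)) ⬝ᵥ A.mulVec (g (Fin.last K)) = y} =
      Fintype.card F ^ (k - K - 1) := by
  intro y
  simpa only [Fintype.card_fin] using
    stmt_18_general (bijective_mulVec_dotProduct_of_pow hs hsN hS) hg A₀ y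
end
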